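/- Let n ≥ 1 and P ≥ 2 be integers, let T ≥ 1 be an integer, and let η > 0, v ≥ 0, L ≥ 0, Δ ≥ 0 be real numbers. For each t ∈ {1,…,T} let f_t : ℝⁿ → ℝ be a convex function, let x̃_t, x_t, g_t ∈ ℝⁿ (Euclidean norm ‖·‖ and inner product ⟨·,·⟩), and let x_{T+1} ∈ ℝⁿ. Assume: (i) for every t and every y ∈ ℝⁿ, f_t(y) ≥ f_t(x̃_t) + ⟨g_t, y − x̃_t⟩ (g_t is a subgradient of f_t at x̃_t), and ‖g_t‖ ≤ L; (ii) x_{t+1} = x_t − (η/√t)·g_t for all t ∈ {1,…,T}; (iii) for each t there exist vectors s_{t,1},…,s_{t,P−1} ∈ ℝⁿ with x̃_t − x_t = Σ_{k=1}^{P−1} s_{t,k} and, for every coordinate i ∈ {1,…,n} and every k, |(s_{t,k})_i| ≤ (v/√t)·|(x̃_t)_i| (the significance filter with threshold v_t = v/√t); (iv) ½‖x̃_t‖² ≤ Δ² for all t ∈ {1,…,T}. Then for every x* ∈ ℝⁿ with ½‖x* − x_t‖² ≤ Δ² for all t ∈ {1,…,T}, the regret satisfies Σ_{t=1}^T ( f_t(x̃_t)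 − f_t(x*) ) ≤ ( η·L² + Δ²/η + 2√2·Δ·(P−1)·L·n·√n·v )·√T. In particular the regret is O(√T), so the regret divided by T tends to 0 as T → ∞. -/

import Mathlib

open scoped RealInnerProductSpace

theorem isp_coord_norm {n : ℕ} (c : ℝ) (hc : 0 ≤ c) (s y : EuclideanSpace ℝ (Fin n))
    (h : ∀ i, |s i| ≤ c * |y i|) : ‖s‖ ≤ c * ‖y‖ := by
  apply le_of_sq_le_sq _ (by positivity)
  rw [mul_pow, EuclideanSpace.real_norm_sq_eq, EuclideanSpace.real_norm_sq_eq, Finset.mul_sum]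
  apply Finset.sum_le_sum
  intro i _
  rw [← sq_abs (s i), ← sq_abs (y i), ← mul_pow]
  exact pow_le_pow_left₀ (abs_nonneg _) (h i) 2

theorem isp_descent {n : ℕ} (e : ℝ) (he : 0 < e) (x z g : EuclideanSpace ℝ (Fin n)) :
    ⟪g, x - z⟫ = e / 2 * ‖g‖ ^ 2 +
      (1 / e) * ((1 / 2) * ‖z - x‖ ^ 2 - (1 / 2) * ‖z - (x - e • g)‖ ^ 2) := by
  have h : z - (x - e • g) = e • g - (x - z) := by abel
  rw [h, norm_sub_sq_real (e • g) (x - z), norm_sub_rev z x, norm_smul, inner_smul_left, mul_pow]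
  simp
  field_simp
  ring

/-- Theorem 1 (convergence of SGD under the ISP model): with decreasing step
sizes `η/√t`, `L`-bounded subgradients, the per-parameter significance filter
with decreasing threshold `v/√t`, and bounded diameter `Δ`, the regret over `T`
steps is at most `(ηL² + Δ²/η + 2√2·Δ·(P−1)·L·n·√n·v)·√T = O(√T)`. -/
theorem isp_sgd_regret_bound
    (n P T : ℕ) (hn : 1 ≤ n) (hP : 2 ≤ P) (hT : 1 ≤ T)
    (η v L Δ : ℝ) (hη : 0 < η) (hv : 0 ≤ v) (hL : 0 ≤ L) (hΔ : 0 ≤ Δ)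
    (f : ℕ → EuclideanSpace ℝ (Fin n) → ℝ)
    (xtil x g : ℕ → EuclideanSpace ℝ (Fin n))
    -- each `f t` is convex
    (hconv : ∀ t ∈ Finset.Icc 1 T, ConvexOn ℝ Set.univ (f t))
    -- (i) `g t` is a subgradient of `f t` at `xtil t`, bounded by `L`
    (hsub : ∀ t ∈ Finset.Icc 1 T, ∀ y : EuclideanSpace ℝ (Fin n),
      f t (xtil t) + ⟪g t, y - xtil t⟫ ≤ f t y)
    (hgL : ∀ t ∈ Finset.Icc 1 T, ‖g t‖ ≤ L)
    -- (ii) SGD update with step size `η/√t`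
    (hupd : ∀ t ∈ Finset.Icc 1 T, x (t + 1) = x t - (η / Real.sqrt t) • g t)
    -- (iii) significance filter: the gap is a sum of `P−1` per-worker
    -- accumulated updates, each coordinatewise `(v/√t)`-insignificant
    (hfilter : ∀ t ∈ Finset.Icc 1 T,
      ∃ s : Fin (P - 1) → EuclideanSpace ℝ (Fin n),
        xtil t - x t = ∑ k, s k ∧
        ∀ (i : Fin n) (k : Fin (P - 1)),
          |s k i| ≤ (v / Real.sqrt t) * |xtil t i|)
    -- (iv) bounded diameter
    (hxtilΔ : ∀ t ∈ Finset.Icc 1 T, (1 / 2) * ‖xtil t‖ ^ 2 ≤ Δ ^ 2) :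
    ∀ xstar : EuclideanSpace ℝ (Fin n),
      (∀ t ∈ Finset.Icc 1 T, (1 / 2) * ‖xstar - x t‖ ^ 2 ≤ Δ ^ 2) →
      ∑ t ∈ Finset.Icc 1 T, (f t (xtil t) - f t xstar) ≤
        (η * L ^ 2 + Δ ^ 2 / η +
            2 * Real.sqrt 2 * Δ * ((P : ℝ) - 1) * L * (n : ℝ) * Real.sqrt n * v)
          * Real.sqrt T := by
  intro z hz
  set K : ℝ := Real.sqrt 2 * Δ * ((P : ℝ) - 1) * L * v with hK
  have hP1 : (0 : ℝ) ≤ (P : ℝ) - 1 := by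
    have : (2 : ℝ) ≤ P := by exact_mod_cast hP
    linarith
  have hK0 : 0 ≤ K := by positivity
  have step : ∀ t ∈ Finset.Icc 1 T, f t (xtil t) - f t z ≤
      (η * L ^ 2 / 2 + K) * (1 / Real.sqrt t) + Real.sqrt t / η *
        ((1 / 2) * ‖z - x t‖ ^ 2 - (1 / 2) * ‖z - x (t + 1)‖ ^ 2) := by
    intro t ht
    have ht1 : (1 : ℝ) ≤ t := by exact_mod_cast (Finset.mem_Icc.mp ht).1
    have hs : 0 < Real.sqrt t := Real.sqrt_pos.mpr (by linarith)
    have hg := hgL t ht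
    have h1 := hsub t ht z
    have h2 := isp_descent (η / Real.sqrt t) (by positivity) (x t) z (g t)
    rw [← hupd t ht] at h2
    have h3 : ⟪g t, z - xtil t⟫ = - ⟪g t, x t - z⟫ - ⟪g t, xtil t - x t⟫ := by
      rw [← inner_neg_right, ← inner_sub_right]
      congr 1
      abel
    have hx : ‖xtil t‖ ≤ Real.sqrt 2 * Δ := by
      apply le_of_sq_le_sq _ (by positivity)
      rw [mul_pow, Real.sq_sqrt (by norm_num)]
      linarith [hxtilΔ t ht]
    have h4 : ‖xtil t - x t‖ ≤ ((P : ℝ) - 1) * (v / Real.sqrt t * (Real.sqrt 2 * Δ)) := by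
      obtain ⟨s, hs1, hs2⟩ := hfilter t ht
      rw [hs1]
      have hb : ∀ k ∈ Finset.univ, ‖s k‖ ≤ v / Real.sqrt t * (Real.sqrt 2 * Δ) := by
        intro k _
        refine (isp_coord_norm (v / Real.sqrt t) (by positivity) _ _ (fun i => hs2 i k)).trans ?_
        gcongr
      refine (norm_sum_le_of_le _ hb).trans (le_of_eq ?_)
      simp [Nat.cast_sub (show 1 ≤ P by omega)]
    have h5 : ⟪g t, xtil t - x t⟫ ≤ K * (1 / Real.sqrt t) := by
      calc ⟪g t, xtil t - x t⟫ ≤ ‖g t‖ * ‖xtil t - x t‖ := real_inner_le_norm _ _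
        _ ≤ L * (((P : ℝ) - 1) * (v / Real.sqrt t * (Real.sqrt 2 * Δ))) := by gcongr
        _ = K * (1 / Real.sqrt t) := by rw [hK]; ring
    have h6 : η / Real.sqrt t / 2 * ‖g t‖ ^ 2 ≤ η * L ^ 2 / 2 * (1 / Real.sqrt t) := by
      calc η / Real.sqrt t / 2 * ‖g t‖ ^ 2 ≤ η / Real.sqrt t / 2 * L ^ 2 := by gcongr
        _ = _ := by ring
    rw [one_div_div] at h2
    linarith
  have key : ∀ m : ℕ, m ≤ T → ∑ t ∈ Finset.Icc 1 m, (f t (xtil t) - f t z) ≤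
      (η * L ^ 2 + Δ ^ 2 / η + 2 * K) * Real.sqrt m
        - Real.sqrt m / η * ((1 / 2) * ‖z - x (m + 1)‖ ^ 2) := by
    intro m
    induction m with
    | zero => simp
    | succ m ih =>
      intro hm
      have hmem : m + 1 ∈ Finset.Icc 1 T := Finset.mem_Icc.mpr ⟨by omega, hm⟩
      rw [Finset.sum_Icc_succ_top (by omega)]
      have h1 := ih (by omega)
      have h2 := step (m + 1) hmem
      have h3 := hz (m + 1) hmem
      set D := (1 / 2) * ‖z - x (m + 1)‖ ^ 2
      set D' := (1 / 2) * ‖z - x (m + 1 + 1)‖ ^ 2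
      have hbp : 0 < Real.sqrt ((m + 1 : ℕ) : ℝ) := Real.sqrt_pos.mpr (by positivity)
      have hap : 0 ≤ Real.sqrt (m : ℝ) := Real.sqrt_nonneg _
      have hab : Real.sqrt (m : ℝ) ≤ Real.sqrt ((m + 1 : ℕ) : ℝ) :=
        Real.sqrt_le_sqrt (by push_cast; linarith)
      have ha2 : Real.sqrt (m : ℝ) ^ 2 = m := Real.sq_sqrt (by positivity)
      have hb2 : Real.sqrt ((m + 1 : ℕ) : ℝ) ^ 2 = m + 1 := by
        rw [Real.sq_sqrt (by positivity)]; push_cast; ring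
      set a := Real.sqrt (m : ℝ)
      set b := Real.sqrt ((m + 1 : ℕ) : ℝ)
      have hinv : 1 / b ≤ 2 * (b - a) := by
        rw [div_le_iff₀ hbp]
        nlinarith [sq_nonneg (b - a)]
      have h4 : (η * L ^ 2 / 2 + K) * (1 / b) ≤ (η * L ^ 2 / 2 + K) * (2 * (b - a)) := by
        gcongr
      have h5 : (b - a) / η * D ≤ (b - a) / η * Δ ^ 2 :=
        mul_le_mul_of_nonneg_left h3 (div_nonneg (by linarith) hη.le)
      have e1 : (b - a) / η * D = b / η * D - a / η * D := by ring
      have e2 : (b - a) / η * Δ ^ 2 = Δ ^ 2 / η * b - Δ ^ 2 / η * a := by ring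
      rw [e1, e2] at h5
      rw [mul_sub] at h2
      linarith
  refine (key T le_rfl).trans ?_
  have h1 : 0 ≤ Real.sqrt T / η * ((1 / 2) * ‖z - x (T + 1)‖ ^ 2) := by positivity
  have hn1 : (1 : ℝ) ≤ n := by exact_mod_cast hn
  have hn2 : (1 : ℝ) ≤ n * Real.sqrt n := one_le_mul_of_one_le_of_one_le hn1
    (Real.one_le_sqrt.mpr hn1)
  have h2 : 2 * K ≤ 2 * Real.sqrt 2 * Δ * ((P : ℝ) - 1) * L * (n : ℝ) * Real.sqrt n * v := by
    calc 2 * K ≤ 2 * K * (n * Real.sqrt n) := le_mul_of_one_le_right (by positivity) hn2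
      _ = _ := by rw [hK]; ring
  have h3 : (η * L ^ 2 + Δ ^ 2 / η + 2 * K) * Real.sqrt T ≤ (η * L ^ 2 + Δ ^ 2 / η +
      2 * Real.sqrt 2 * Δ * ((P : ℝ) - 1) * L * (n : ℝ) * Real.sqrt n * v) * Real.sqrt T := by
    gcongr
  linarith
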